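/- arXiv:2410.09969 — 6 statements merged into one kernel-verified Lean document; each statement's English description precedes it below -/
import Mathlib

section
/- Let p be a prime, k a perfect field of characteristic p, W = W(k) its ring of p-typical Witt vectors with Frobenius σ, and let M be a W-module on which multiplication by p is injective, equipped with an additive σ-semilinear map F : M → M. Let B' ⊆ M be a W-submodule with F(B') ⊆ B'. Suppose x ∈ M and k₀ ∈ ℕ are such that p^{k₀}·x ∈ B', F(x) − x ∈ B', and for every m ∈ ℕ there exists y ∈ B' with F^m(p^{k₀}·x) = p^m·y. Then x ∈ B'. (This is the core step in the paper's proof that for a smooth proper variety with torsion-free H³_cris, the group cœur(H²(X,WΩ¹))^{F=1} is a free ℤ_p-module.) -/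
/-- Let `p` be a prime, `k` a perfect field of characteristic `p`,
`W = W(k)` its ring of `p`-typical Witt vectors with Frobenius `σ`, and `M` a `W`-module
on which multiplication by `p` is injective, equipped with an additive `σ`-semilinear map
`F : M → M`.  Let `B' ⊆ M` be a `W`-submodule stable under `F`.  Suppose `x ∈ M` and
`k₀ ∈ ℕ` satisfy `p^k₀ • x ∈ B'`, `F x − x ∈ B'`, and for every `m` there is `y ∈ B'`
with `F^[m] (p^k₀ • x) = p^m • y`.  Then `x ∈ B'`. -/
theorem stmt0 (p : ℕ) [Fact p.Prime] (k : Type*) [Field k] [CharP k p] [PerfectRing k p]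
    (M : Type*) [AddCommGroup M] [Module (WittVector p k) M]
    (hptf : ∀ x : M, (p : WittVector p k) • x = 0 → x = 0)
    (F : M → M)
    (hFadd : ∀ x y : M, F (x + y) = F x + F y)
    (hFsl : ∀ (a : WittVector p k) (x : M), F (a • x) = WittVector.frobenius a • F x)
    (B' : Submodule (WittVector p k) M)
    (hFB : ∀ b ∈ B', F b ∈ B')
    (x : M) (k₀ : ℕ)
    (hx1 : ((p : WittVector p k) ^ k₀) • x ∈ B')
    (hx2 : F x - x ∈ B')
    (hx3 : ∀ m : ℕ, ∃ y ∈ B',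
      F^[m] (((p : WittVector p k) ^ k₀) • x) = ((p : WittVector p k) ^ m) • y) :
    x ∈ B' := by
  have hinj : ∀ (n : ℕ) (z : M), ((p : WittVector p k) ^ n) • z = 0 → z = 0 := by
    intro n
    induction n with
    | zero => intro z hz; simpa using hz
    | succ n ih =>
      intro z hz
      rw [pow_succ, mul_smul] at hz
      exact hptf z (ih _ hz)
  have hiter : ∀ (m : ℕ) (z : M), F^[m] (((p : WittVector p k) ^ k₀) • z)
      = ((p : WittVector p k) ^ k₀) • F^[m] z := by
    intro m
    induction m with
    | zero => intro z; rfl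
    | succ m ih =>
      intro z
      rw [Function.iterate_succ_apply, Function.iterate_succ_apply, hFsl, map_pow,
        map_natCast, ih]
  have hdiff : ∀ m : ℕ, F^[m] x - x ∈ B' := by
    intro m
    induction m with
    | zero => simp
    | succ m ih =>
      have h1 := hFadd (F^[m] x - x) x
      rw [sub_add_cancel] at h1
      rw [Function.iterate_succ_apply', h1, add_sub_assoc]
      exact B'.add_mem (hFB _ ih) hx2
  obtain ⟨y, hy, h⟩ := hx3 k₀
  rw [hiter, ← sub_eq_zero, ← smul_sub] at h
  have h2 : F^[k₀] x = y := sub_eq_zero.mp (hinj _ _ h)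
  have h3 := B'.sub_mem hy (hdiff k₀)
  rwa [h2, sub_sub_cancel] at h3
end

section
/- Let k be an algebraically closed field of characteristic p > 0. Define additive maps F, V : k² → k² by F(x,y) = (0, x^p) and V(x,y) = (0, x^{1/p}), where x^{1/p} denotes the unique p-th root of x in k. Then a k-linear endomorphism f of k² satisfies f ∘ F = F ∘ f and f ∘ V = V ∘ f if and only if there exist a, c ∈ k with a^{p²} = a such that f(x,y) = (a·x, c·x + a^p·y) for all (x,y) ∈ k². (This is the explicit semilinear-algebra computation underlying the paper's Lemma computing Hom_k(E[p], E[p]) for a supersingular elliptic curve E via Dieudonné modules.) -/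
/-- Let `k` be an algebraically closed field of characteristic `p > 0`.
Define additive maps `F, V : k² → k²` by `F (x, y) = (0, x^p)` and
`V (x, y) = (0, x^{1/p})` (here `V` is characterized by `(V z).1 = 0` and
`((V z).2)^p = z.1`, which pins down the unique `p`-th root).  Then a `k`-linear
endomorphism `f` of `k²` commutes with `F` and `V` iff there are `a, c ∈ k` with
`a^{p²} = a` such that `f (x, y) = (a·x, c·x + a^p·y)` for all `x, y`. -/
theorem stmt1 (p : ℕ) [Fact p.Prime] (k : Type*) [Field k] [IsAlgClosed k] [CharP k p]
    (Fmap Vmap : k × k → k × k)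
    (hFmap : ∀ z : k × k, Fmap z = (0, z.1 ^ p))
    (hVmap : ∀ z : k × k, (Vmap z).1 = 0 ∧ ((Vmap z).2) ^ p = z.1)
    (f : (k × k) →ₗ[k] (k × k)) :
    ((∀ z : k × k, f (Fmap z) = Fmap (f z)) ∧ (∀ z : k × k, f (Vmap z) = Vmap (f z))) ↔
      ∃ a c : k, a ^ (p ^ 2) = a ∧
        ∀ x y : k, f (x, y) = (a * x, c * x + a ^ p * y) := by
  have inj : ∀ u v : k, u ^ p = v ^ p → u = v := fun u v h => frobenius_inj k p h
  have hp : p ≠ 0 := (Fact.out : p.Prime).ne_zero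
  constructor
  · rintro ⟨hF, hV⟩
    have h01 : f (0, 1) = (0, (f (1, 0)).1 ^ p) := by
      have h := hF (1, 0)
      rw [hFmap, hFmap] at h
      simpa using h
    have hv : Vmap (1, 0) = (0, 1) := by
      obtain ⟨h1, h2⟩ := hVmap (1, 0)
      refine Prod.ext h1 (inj _ _ ?_)
      simpa using h2
    refine ⟨(f (1, 0)).1, (f (1, 0)).2, ?_, ?_⟩
    · have h := hV (1, 0)
      rw [hv, h01] at h
      have h2 := (hVmap (f (1, 0))).2
      rw [← h] at h2
      rw [pow_two, pow_mul]
      exact h2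
    · intro x y
      have e : ((x, y) : k × k) = x • ((1, 0) : k × k) + y • ((0, 1) : k × k) := by simp
      rw [e, map_add, map_smul, map_smul, h01]
      ext <;> simp [mul_comm]
  · rintro ⟨a, c, ha, hf⟩
    constructor
    · rintro ⟨x, y⟩
      rw [hFmap, hFmap, hf, hf]
      simp [mul_pow]
    · rintro ⟨x, y⟩
      obtain ⟨h1, h2⟩ := hVmap (x, y)
      obtain ⟨h3, h4⟩ := hVmap (f (x, y))
      have e : Vmap (x, y) = (0, (Vmap (x, y)).2) := Prod.ext h1 rfl
      rw [e, hf]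
      refine Prod.ext ?_ (inj _ _ ?_)
      · simp [h3]
      · rw [h4, hf]
        simp only [mul_zero, zero_add]
        rw [mul_pow, h2, ← pow_mul, ← pow_two, ha]
end

section
/- Let k be an algebraically closed field of characteristic p > 0, and define F, V : k² → k² by F(x,y) = (0, x^p) and V(x,y) = (0, x^{1/p}). Then the set E of k-linear endomorphisms f of k² satisfying f ∘ F = F ∘ f and f ∘ V = V ∘ f is an additive subgroup of End_k(k²), the map sending f to the pair (a, c) defined by f(1,0) = (a,c) is an isomorphism of additive groups from E onto {a ∈ k : a^{p²} = a} × k, and the additive group {a ∈ k : a^{p²} = a} is isomorphic to (ℤ/pℤ)²; hence E ≅ (ℤ/pℤ)² ⊕ k as an abelian group. (This is the paper's Lemma that Hom_k(E[p],E[p]) ≅ (ℤ/p)² ⊕ k for a supersingular elliptic curve E.) -/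
/-- Matrix description of the endomorphisms commuting with `F` and `V`. -/
lemma comm_iff (p : ℕ) [Fact p.Prime] (k : Type*) [Field k] [CharP k p]
    (Fmap Vmap : k × k → k × k)
    (hFmap : ∀ z : k × k, Fmap z = (0, z.1 ^ p))
    (hVmap : ∀ z : k × k, (Vmap z).1 = 0 ∧ ((Vmap z).2) ^ p = z.1)
    (f : (k × k) →ₗ[k] (k × k)) :
    ((∀ z : k × k, f (Fmap z) = Fmap (f z)) ∧ (∀ z : k × k, f (Vmap z) = Vmap (f z))) ↔
      ((f (0, 1)).1 = 0 ∧ (f (0, 1)).2 = (f (1, 0)).1 ^ p ∧ (f (0, 1)).2 ^ p = (f (1, 0)).1) := by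
  have hp : p ≠ 0 := (Fact.out : p.Prime).ne_zero
  have hinj : ∀ x y : k, x ^ p = y ^ p → x = y := fun x y h => frobenius_inj k p h
  have h0 : ∀ y : k, f (0, y) = y • f (0, 1) := by
    intro y
    rw [← map_smul]
    simp
  have h1 : ∀ z : k × k, f z = z.1 • f (1, 0) + z.2 • f (0, 1) := by
    intro z
    rw [← map_smul, ← map_smul, ← map_add]
    simp
  constructor
  · rintro ⟨hF, hV⟩
    have e := hF (1, 0)
    rw [hFmap, hFmap] at e
    simp only [one_pow] at e
    have v := hV (1, 0)
    obtain ⟨v1, v2⟩ := hVmap (1, 0)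
    have v3 : Vmap (1, 0) = (0, 1) := by
      refine Prod.ext v1 (hinj _ _ ?_)
      rw [v2]; simp
    rw [v3] at v
    refine ⟨by rw [e], by rw [e], ?_⟩
    rw [v, (hVmap _).2]
  · rintro ⟨hb, hd, hda⟩
    constructor
    · intro z
      rw [hFmap, hFmap, h0, h1 z]
      ext
      · simp [hb]
      · simp [hb, hd, mul_pow]
    · intro z
      obtain ⟨v1, v2⟩ := hVmap z
      obtain ⟨w1, w2⟩ := hVmap (f z)
      have v3 : Vmap z = (0, (Vmap z).2) := Prod.ext v1 rfl
      rw [v3, h0]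
      refine Prod.ext ?_ (hinj _ _ ?_)
      · simp [hb, w1]
      · rw [w2, h1 z]
        simp only [Prod.smul_snd, smul_eq_mul, mul_pow, v2, hda, Prod.fst_add, Prod.smul_fst, hb]
        simp

/-- The group of solutions of `a ^ (p ^ 2) = a`. -/
def fixA (p : ℕ) [Fact p.Prime] (k : Type*) [Field k] [CharP k p] : AddSubgroup k where
  carrier := {a | a ^ (p ^ 2) = a}
  zero_mem' := by simp [(Fact.out : p.Prime).ne_zero]
  add_mem' := by
    intro a b ha hb
    simp only [Set.mem_ofPred_eq] at *
    rw [add_pow_char_pow, ha, hb]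
  neg_mem' := by
    intro a ha
    simp only [Set.mem_ofPred_eq] at *
    have := map_neg (iterateFrobenius k p 2) a
    simpa only [iterateFrobenius_def, ha] using this

open Polynomial in
lemma card_fixA (p : ℕ) [Fact p.Prime] (k : Type*) [Field k] [IsAlgClosed k] [CharP k p] :
    Nat.card (fixA p k) = p ^ 2 := by
  have hp : 1 < p := (Fact.out : p.Prime).one_lt
  have hne : (X ^ p ^ 2 - X : k[X]) ≠ 0 :=
    FiniteField.X_pow_card_pow_sub_X_ne_zero k two_ne_zero hp
  have key : Fintype.card ((X ^ p ^ 2 - X : k[X]).rootSet k) = (X ^ p ^ 2 - X : k[X]).natDegree :=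
    card_rootSet_eq_natDegree (galois_poly_separable p _ (dvd_pow (dvd_refl p) two_ne_zero))
      (IsAlgClosed.splits _)
  rw [FiniteField.X_pow_card_pow_sub_X_natDegree_eq k two_ne_zero hp,
    ← Nat.card_eq_fintype_card] at key
  rw [← key]
  refine Nat.card_congr (Equiv.setCongr ?_)
  ext a
  rw [mem_rootSet_of_ne hne]
  simp [fixA, sub_eq_zero]

lemma equiv_of_card (p : ℕ) [Fact p.Prime] (G : Type*) [AddCommGroup G] [Module (ZMod p) G]
    (hc : Nat.card G = p ^ 2) : Nonempty (G ≃+ (ZMod p × ZMod p)) := by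
  have hp : 1 < p := (Fact.out : p.Prime).one_lt
  have : Finite G := Nat.finite_of_card_ne_zero (by rw [hc]; positivity)
  have hfin : Module.Finite (ZMod p) G := Module.Finite.of_finite
  have h2 := FiniteField.pow_finrank_eq_natCard p G
  rw [hc] at h2
  have h3 : Module.finrank (ZMod p) G = 2 := Nat.pow_right_injective hp h2
  have h4 : Module.finrank (ZMod p) (ZMod p × ZMod p) = 2 := by
    rw [Module.finrank_prod, Module.finrank_self]
  exact ⟨(LinearEquiv.ofFinrankEq (R := ZMod p) G (ZMod p × ZMod p) (h3.trans h4.symm)).toAddEquiv⟩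

lemma fixA_equiv (p : ℕ) [Fact p.Prime] (k : Type*) [Field k] [IsAlgClosed k] [CharP k p] :
    Nonempty (fixA p k ≃+ (ZMod p × ZMod p)) := by
  let _ : Module (ZMod p) (fixA p k) := AddCommGroup.zmodModule (by
    intro x
    ext
    simp)
  exact equiv_of_card p (fixA p k) (card_fixA p k)

/-- The group of endomorphisms described by matrix entries. -/
def endE (p : ℕ) [Fact p.Prime] (k : Type*) [Field k] [CharP k p] :
    AddSubgroup ((k × k) →ₗ[k] (k × k)) where
  carrier := {f | (f (0, 1)).1 = 0 ∧ (f (0, 1)).2 = (f (1, 0)).1 ^ p ∧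
    (f (0, 1)).2 ^ p = (f (1, 0)).1}
  zero_mem' := by simp [(Fact.out : p.Prime).ne_zero]
  add_mem' := by
    rintro f g ⟨h1, h2, h3⟩ ⟨h4, h5, h6⟩
    refine ⟨by simp [h1, h4], ?_, ?_⟩
    · simp [h2, h5, add_pow_char]
    · simp only [LinearMap.add_apply, Prod.snd_add, Prod.fst_add, add_pow_char, h3, h6]
  neg_mem' := by
    rintro f ⟨h1, h2, h3⟩
    have hn : ∀ x : k, (-x) ^ p = - x ^ p := fun x => map_neg (frobenius k p) x
    refine ⟨by simp [h1], ?_, ?_⟩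
    · simp [h2, hn]
    · simp only [LinearMap.neg_apply, Prod.snd_neg, Prod.fst_neg, hn, h3]

/-- The isomorphism `f ↦ f (1, 0)`. -/
def phiE (p : ℕ) [Fact p.Prime] (k : Type*) [Field k] [CharP k p] :
    endE p k ≃+ fixA p k × k where
  toFun f := (⟨(f.1 (1, 0)).1, by
    obtain ⟨f, h1, h2, h3⟩ := f
    change (f (1, 0)).1 ^ (p ^ 2) = (f (1, 0)).1
    rw [pow_two, pow_mul, ← h2, h3]⟩, (f.1 (1, 0)).2)
  invFun q := ⟨((LinearMap.fst k k k).smulRight ((q.1 : k), q.2)) +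
      ((LinearMap.snd k k k).smulRight (0, (q.1 : k) ^ p)), by
    obtain ⟨⟨a, ha⟩, c⟩ := q
    have ha' : a ^ (p ^ 2) = a := ha
    refine ⟨by simp, by simp, ?_⟩
    simpa [← pow_mul, ← pow_two] using ha'⟩
  left_inv := by
    rintro ⟨f, h1, h2, h3⟩
    apply Subtype.ext
    refine LinearMap.prod_ext ?_ ?_
    · ext <;> simp
    · ext <;> simp [h1, h2]
  right_inv := by
    rintro ⟨⟨a, ha⟩, c⟩
    simp
  map_add' f g := rfl

/-- With `F, V : k² → k²` as in the Dieudonné module of the `p`-torsion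
of a supersingular elliptic curve (`F (x,y) = (0, x^p)`, `V (x,y) = (0, x^{1/p})`), the
set `E` of `k`-linear endomorphisms of `k²` commuting with `F` and `V` is an additive
subgroup of `End_k(k²)`; the map `f ↦ (a, c)` with `f (1,0) = (a, c)` is an additive
group isomorphism of `E` onto `{a : a^{p²} = a} × k`; the additive group
`{a : a^{p²} = a}` is isomorphic to `(ℤ/p)²`; hence `E ≅ (ℤ/p)² ⊕ k`. -/
theorem stmt2 (p : ℕ) [Fact p.Prime] (k : Type*) [Field k] [IsAlgClosed k] [CharP k p]
    (Fmap Vmap : k × k → k × k)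
    (hFmap : ∀ z : k × k, Fmap z = (0, z.1 ^ p))
    (hVmap : ∀ z : k × k, (Vmap z).1 = 0 ∧ ((Vmap z).2) ^ p = z.1) :
    ∃ E : AddSubgroup ((k × k) →ₗ[k] (k × k)),
      (∀ f : (k × k) →ₗ[k] (k × k),
          f ∈ E ↔ (∀ z : k × k, f (Fmap z) = Fmap (f z)) ∧
                  (∀ z : k × k, f (Vmap z) = Vmap (f z))) ∧
      ∃ A : AddSubgroup k,
        (∀ a : k, a ∈ A ↔ a ^ (p ^ 2) = a) ∧
        (∃ φ : E ≃+ A × k, ∀ f : E,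
            (((φ f).1 : k) = ((f : (k × k) →ₗ[k] (k × k)) (1, 0)).1) ∧
            ((φ f).2 = ((f : (k × k) →ₗ[k] (k × k)) (1, 0)).2)) ∧
        Nonempty (A ≃+ (ZMod p × ZMod p)) ∧
        Nonempty (E ≃+ ((ZMod p × ZMod p) × k)) := by
  obtain ⟨e⟩ := fixA_equiv p k
  refine ⟨endE p k, fun f => (comm_iff p k Fmap Vmap hFmap hVmap f).symm, fixA p k,
    fun a => Iff.rfl, ⟨phiE p k, fun f => ⟨rfl, rfl⟩⟩, ⟨e⟩,
    ⟨(phiE p k).trans (AddEquiv.prodCongr e (AddEquiv.refl k))⟩⟩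
end

section
/- Let k be an algebraically closed field of characteristic p > 0, and let V and V' be finite-dimensional k-vector spaces. Let u : V → V' be a surjective additive map that is Frobenius-semilinear, i.e. u(a·v) = a^p·u(v) for all a ∈ k and v ∈ V, and let w : V → V' be a k-linear map. Then the additive map u − w : V → V' is surjective. (This semilinear-algebra fact is the engine of the paper's proof that W* − C : H^{i−2}(X, ZΩ¹_X) → H^{i−2}(X^{(p)}, Ω¹_{X^{(p)}}) is surjective in its injectivity criterion for the map from flat to crystalline cohomology.) -/
open Polynomial in
theorem aux_root (p : ℕ) [Fact p.Prime] (k : Type*) [Field k] [IsAlgClosed k] [CharP k p]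
    (r : k → k) (hr : ∀ a, r a ^ p = a) (c : ℕ → k) (m : ℕ) :
    ∃ (t : k) (x : ℕ → k), x 0 = 1 + c 0 * t ∧ (∀ i, x (i + 1) = r (x i) + c (i + 1) * t) ∧
      x m = t ^ p := by
  have hp : p.Prime := Fact.out
  let x : k → ℕ → k := fun t n => Nat.rec (1 + c 0 * t) (fun i y => r y + c (i + 1) * t) n
  have hP : ∀ j, ∃ P : k[X], P.natDegree ≤ p ^ j ∧ ∀ t, x t j ^ p ^ j = P.eval t := by
    intro j
    induction j with
    | zero =>
      refine ⟨1 + C (c 0) * X, ?_, ?_⟩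
      · rw [pow_zero]; compute_degree
      · intro t; simp [x]
    | succ j ih =>
      obtain ⟨P, hd, he⟩ := ih
      refine ⟨P + C (c (j + 1) ^ p ^ (j + 1)) * X ^ p ^ (j + 1), ?_, ?_⟩
      · refine (natDegree_add_le _ _).trans (max_le ?_ (natDegree_C_mul_X_pow_le _ _))
        exact hd.trans (Nat.pow_le_pow_right hp.pos (Nat.le_succ j))
      · intro t
        have h1 : x t (j + 1) = r (x t j) + c (j + 1) * t := rfl
        have h2 : r (x t j) ^ p ^ (j + 1) = x t j ^ p ^ j := by
          rw [pow_succ', pow_mul, hr]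
        rw [h1, add_pow_char_pow, h2, he, mul_pow]
        simp
  obtain ⟨P, hd, he⟩ := hP m
  have hlt : P.natDegree < p ^ (m + 1) := hd.trans_lt (Nat.pow_lt_pow_right hp.one_lt (Nat.lt_succ_self m))
  have hdeg : (X ^ p ^ (m + 1) - P).degree ≠ 0 := by
    rw [degree_sub_eq_left_of_degree_lt]
    · rw [degree_X_pow]
      exact_mod_cast (pow_pos hp.pos (m + 1)).ne'
    · rw [degree_X_pow]
      exact (degree_le_natDegree).trans_lt (by exact_mod_cast hlt)
  obtain ⟨t, ht⟩ := IsAlgClosed.exists_root _ hdeg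
  refine ⟨t, x t, rfl, fun i => rfl, ?_⟩
  have h3 : t ^ p ^ (m + 1) = P.eval t := by
    simpa [IsRoot, sub_eq_zero] using ht
  rw [← he, pow_succ', pow_mul] at h3
  exact (iterateFrobenius_inj k p m (by simpa [iterateFrobenius_def] using h3)).symm

theorem aux_dep (k : Type*) [Field k] (V : Type*) [AddCommGroup V] [Module k V]
    [FiniteDimensional k V] (b : ℕ → V) :
    ∃ (m : ℕ) (c : ℕ → k), ∑ i ∈ Finset.range m, c i • b i = b m := by
  let f : ℕ →o Submodule k V :=
    ⟨fun n => Submodule.span k (b '' (Finset.range n : Set ℕ)), fun i j h => by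
      apply Submodule.span_mono
      apply Set.image_mono
      exact_mod_cast Finset.range_mono h⟩
  obtain ⟨n, hn⟩ := monotone_stabilizes_iff_noetherian.mpr (inferInstance : IsNoetherian k V) f
  have h1 : b n ∈ f (n + 1) := Submodule.subset_span ⟨n, by simp, rfl⟩
  rw [← hn (n + 1) (Nat.le_succ n)] at h1
  obtain ⟨c, hc⟩ := Submodule.mem_span_image_finset_iff_exists_fun k |>.mp h1
  refine ⟨n, fun i => if h : i ∈ Finset.range n then c ⟨i, h⟩ else 0, ?_⟩
  rw [← hc, ← Finset.sum_coe_sort]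
  refine Finset.sum_congr rfl fun i _ => ?_
  simp only [dif_pos i.2]

/-- Let `k` be an algebraically closed field of characteristic `p > 0`,
`V` and `V'` finite-dimensional `k`-vector spaces, `u : V → V'` a surjective additive
Frobenius-semilinear map (`u (a • v) = a^p • u v`), and `w : V →ₗ[k] V'` a `k`-linear
map.  Then `u − w` is surjective. -/
theorem stmt3 (p : ℕ) [Fact p.Prime] (k : Type*) [Field k] [IsAlgClosed k] [CharP k p]
    (V V' : Type*) [AddCommGroup V] [Module k V] [FiniteDimensional k V]
    [AddCommGroup V'] [Module k V'] [FiniteDimensional k V']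
    (u : V → V')
    (huadd : ∀ a b : V, u (a + b) = u a + u b)
    (husl : ∀ (a : k) (v : V), u (a • v) = a ^ p • u v)
    (husurj : Function.Surjective u)
    (w : V →ₗ[k] V') :
    Function.Surjective (fun v : V => u v - w v) := by
  have hp : p.Prime := Fact.out
  intro y
  obtain ⟨g, hg⟩ := husurj.hasRightInverse
  have hr' : ∀ a : k, ∃ z, z ^ p = a := fun a => IsAlgClosed.exists_pow_nat_eq a hp.pos
  choose r hr using hr'
  let b : ℕ → V := fun n => Nat.rec (g y) (fun _ v => g (w v)) n
  have hb0 : u (b 0) = y := hg y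
  have hbs : ∀ i, u (b (i + 1)) = w (b i) := fun i => hg _
  obtain ⟨m, c, hc⟩ := aux_dep k V b
  let U : V →+ V' := AddMonoidHom.mk' u huadd
  have hU : ∀ v, U v = u v := fun _ => rfl
  rcases m with _ | m
  · refine ⟨0, ?_⟩
    have h0 : b 0 = 0 := by simpa using hc.symm
    have : u 0 = 0 := U.map_zero
    rw [← hb0, h0]
    simp [this]
  obtain ⟨t, x, hx0, hxs, hxm⟩ := aux_root p k r hr c m
  have key : ∀ j, ∑ i ∈ Finset.range (j + 1), x i • b i = b 0
      + ∑ i ∈ Finset.range j, r (x i) • b (i + 1)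
      + t • ∑ i ∈ Finset.range (j + 1), c i • b i := by
    intro j
    induction j with
    | zero => simp [hx0]; module
    | succ j ih =>
      rw [Finset.sum_range_succ, ih, Finset.sum_range_succ (fun i => r (x i) • b (i + 1)) j,
        Finset.sum_range_succ (fun i => c i • b i) (j + 1), hxs]
      module
  have hrm : r (x m) = t := frobenius_inj k p (by simp [frobenius_def, hr, hxm])
  have hk := key m
  rw [hc, ← hrm, add_assoc, ← Finset.sum_range_succ (fun i => r (x i) • b (i + 1))] at hk
  refine ⟨∑ i ∈ Finset.range (m + 1), x i • b i, ?_⟩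
  have hw : w (∑ i ∈ Finset.range (m + 1), x i • b i)
      = U (∑ i ∈ Finset.range (m + 1), r (x i) • b (i + 1)) := by
    rw [map_sum, map_sum]
    refine Finset.sum_congr rfl fun i _ => ?_
    rw [hU, husl, hr, hbs, map_smul]
  show u _ - w _ = y
  rw [hw, ← hU, hk, map_add, hU (b 0), hb0, add_sub_cancel_right]
end

section
/- Let k be an algebraically closed field of characteristic p > 0, W = W(k) its ring of p-typical Witt vectors with Frobenius σ, and let M be a finite free W-module equipped with an additive σ-semilinear map F : M → M. Then the map 1 − F : M → M is surjective, and its kernel M^{F=1} is a free ℤ_p-module of finite rank at most the W-rank of M. (This is the assertion, made in the paper's treatment of K3 surfaces of finite height, that 1 − F is surjective on the finitely generated free W-modules H^i(X, WΩ¹) with kernel a free ℤ_p-module of finite rank.) -/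
namespace Stmt4Aux

set_option linter.unusedSectionVars false

variable {p : ℕ} [Fact p.Prime] {k : Type*} [Field k] [IsAlgClosed k] [CharP k p]

instance : PerfectRing k p := inferInstance

open Polynomial in
/-- The auxiliary polynomials. -/
noncomputable def auxP (p : ℕ) {k : Type*} [Field k] (c : ℕ → k) : ℕ → k[X]
  | 0 => 1 + C (c 0) * X ^ p
  | n + 1 => auxP p c n ^ p + C (c (n + 1)) * X ^ p

open Polynomial in
theorem derivative_auxP (c : ℕ → k) (n : ℕ) : derivative (auxP p c n) = 0 := by
  cases n <;> simp [auxP, derivative_pow]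

open Polynomial in
theorem exists_fix (c : ℕ → k) (n : ℕ) : ∃ t : k, (auxP p c n).eval t = t := by
  have hd : derivative (auxP p c n - X) = -1 := by simp [derivative_auxP]
  have : (auxP p c n - X).degree ≠ 0 := by
    intro h
    rw [eq_C_of_degree_eq_zero h] at hd
    simp at hd
  obtain ⟨t, ht⟩ := IsAlgClosed.exists_root _ this
  exact ⟨t, by simpa [sub_eq_zero] using ht⟩

/-- The coefficients of the approximate solution. -/
noncomputable def auxX (c : ℕ → WittVector p k) (T : WittVector p k) : ℕ → WittVector p k
  | 0 => 1 + c 0 * WittVector.frobenius T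
  | n + 1 => WittVector.frobenius (auxX c T n) + c (n + 1) * WittVector.frobenius T

theorem auxX_coeff (c : ℕ → WittVector p k) (T : WittVector p k) (n : ℕ) :
    WittVector.constantCoeff (auxX c T n) =
      (auxP p (fun i => WittVector.constantCoeff (c i)) n).eval (WittVector.constantCoeff T) := by
  have hF : ∀ x : WittVector p k, WittVector.constantCoeff (WittVector.frobenius x) =
      WittVector.constantCoeff x ^ p := fun x => WittVector.coeff_frobenius_charP p x 0
  induction n with
  | zero => simp only [auxX, auxP, map_add, map_mul, map_one, hF]; simp
  | succ n ih => simp only [auxX, auxP, map_add, map_mul, hF, ih]; simp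

theorem exists_T (c : ℕ → WittVector p k) (n : ℕ) :
    ∃ T z : WittVector p k, auxX c T n = T + p * z := by
  obtain ⟨t, ht⟩ := exists_fix (p := p) (fun i => WittVector.constantCoeff (c i)) n
  obtain ⟨T, hT⟩ := WittVector.constantCoeff_surjective p t
  have h : auxX c T n - T ∈ Ideal.span {(p : WittVector p k)} := by
    rw [WittVector.mem_span_p_iff_coeff_zero_eq_zero]
    change WittVector.constantCoeff (auxX c T n - T) = 0
    rw [map_sub, auxX_coeff, hT, ht, sub_self]
  obtain ⟨z, hz⟩ := Ideal.mem_span_singleton.1 h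
  exact ⟨T, z, by rw [← hz]; ring⟩

section

variable {M : Type*} [AddCommGroup M] [Module (WittVector p k) M]

theorem telescope (F : M →+ M)
    (hF : ∀ (a : WittVector p k) (x : M), F (a • x) = WittVector.frobenius a • F x)
    (c : ℕ → WittVector p k) (T : WittVector p k) (v : M) (m : ℕ) :
    ∃ s : M, s - F s = v + WittVector.frobenius T • ∑ i ∈ Finset.range (m + 1), c i • F^[i] v
      - WittVector.frobenius (auxX c T m) • F^[m + 1] v := by
  induction m with
  | zero =>
    refine ⟨auxX c T 0 • v, ?_⟩
    simp only [hF, auxX, zero_add, Finset.range_one, Finset.sum_singleton, Function.iterate_zero,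
      id, Function.iterate_one]
    module
  | succ m ih =>
    obtain ⟨s, hs⟩ := ih
    refine ⟨s + auxX c T (m + 1) • F^[m + 1] v, ?_⟩
    have : F (F^[m + 1] v) = F^[m + 1 + 1] v := (Function.iterate_succ_apply' F _ _).symm
    rw [map_add, hF, add_sub_add_comm, hs, Finset.sum_range_succ _ (m + 1), this]
    conv_lhs => enter [2, 1, 1]; rw [auxX]
    module

theorem exists_rel (F : M →+ M)
    (hF : ∀ (a : WittVector p k) (x : M), F (a • x) = WittVector.frobenius a • F x)
    [IsNoetherian (WittVector p k) M] (v : M) :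
    ∃ (m : ℕ) (c : ℕ → WittVector p k),
      F^[m + 1] v = ∑ i ∈ Finset.range (m + 1), c i • F^[i] v := by
  let N : ℕ →o Submodule (WittVector p k) M :=
    ⟨fun m => Submodule.span _ ((fun i => F^[i] v) '' (Finset.range m : Set ℕ)), fun a b h =>
      Submodule.span_mono (Set.image_mono (by simpa using h))⟩
  obtain ⟨n, hn⟩ := monotone_stabilizes_iff_noetherian.2 ‹_› N
  have h1 : F^[n + 1] v ∈ N (n + 2) := Submodule.subset_span ⟨n + 1, by simp, rfl⟩
  rw [← hn (n + 2) (by omega), hn (n + 1) (by omega)] at h1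
  obtain ⟨c, hc⟩ := (Submodule.mem_span_image_finset_iff_exists_fun _).1 h1
  refine ⟨n, fun i => if h : i ∈ Finset.range (n + 1) then c ⟨i, h⟩ else 0, ?_⟩
  rw [← hc]
  conv_rhs => rw [← Finset.sum_coe_sort]
  refine Finset.sum_congr rfl fun i _ => ?_
  beta_reduce
  rw [dif_pos i.2]

theorem surj_mod_p (F : M →+ M)
    (hF : ∀ (a : WittVector p k) (x : M), F (a • x) = WittVector.frobenius a • F x)
    [IsNoetherian (WittVector p k) M] (v : M) :
    ∃ x z : M, v = x - F x + (p : WittVector p k) • z := by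
  obtain ⟨m, c, hc⟩ := exists_rel F hF v
  obtain ⟨T, z, hT⟩ := exists_T c m
  obtain ⟨s, hs⟩ := telescope F hF c T v m
  refine ⟨s, WittVector.frobenius z • F^[m + 1] v, ?_⟩
  rw [hs, ← hc, hT]
  simp only [map_add, map_mul, map_natCast]
  module

end

theorem limit_W (x : ℕ → WittVector p k) : ∃ s, ∀ n, ∃ z,
    s = ∑ i ∈ Finset.range n, (p : WittVector p k) ^ i * x i + (p : WittVector p k) ^ n * z := by
  obtain ⟨s, hs⟩ := IsPrecomplete.prec
    (inferInstance : IsPrecomplete (Ideal.span {(p : WittVector p k)}) (WittVector p k))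
    (f := fun n => ∑ i ∈ Finset.range n, (p : WittVector p k) ^ i * x i) (by
      intro m n hmn
      simp only [smul_eq_mul, Ideal.mul_top, SModEq.sub_mem, Ideal.span_singleton_pow]
      rw [← neg_mem_iff, neg_sub, ← Finset.sum_Ico_eq_sub _ hmn]
      refine Ideal.sum_mem _ fun i hi => Ideal.mul_mem_right _ _ ?_
      exact Ideal.mem_span_singleton.2 (pow_dvd_pow _ (Finset.mem_Ico.1 hi).1))
  refine ⟨s, fun n => ?_⟩
  have := hs n
  simp only [smul_eq_mul, Ideal.mul_top, SModEq.sub_mem, Ideal.span_singleton_pow] at this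
  rw [← neg_mem_iff, neg_sub] at this
  obtain ⟨z, hz⟩ := Ideal.mem_span_singleton.1 this
  exact ⟨z, by rw [← hz]; ring⟩

theorem haus_W (x : WittVector p k) (h : ∀ n, ∃ z, x = (p : WittVector p k) ^ n * z) : x = 0 := by
  refine IsHausdorff.haus
    (inferInstance : IsHausdorff (Ideal.span {(p : WittVector p k)}) (WittVector p k)) x fun n => ?_
  simp only [smul_eq_mul, Ideal.mul_top, SModEq.zero, Ideal.span_singleton_pow]
  obtain ⟨z, hz⟩ := h n
  exact Ideal.mem_span_singleton.2 ⟨z, hz⟩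

section

variable {M : Type*} [AddCommGroup M] [Module (WittVector p k) M]
    [Module.Free (WittVector p k) M] [Module.Finite (WittVector p k) M]

theorem limit_M (x : ℕ → M) : ∃ s : M, ∀ n, ∃ z : M,
    s = ∑ i ∈ Finset.range n, (p : WittVector p k) ^ i • x i + (p : WittVector p k) ^ n • z := by
  let b := Module.finBasis (WittVector p k) M
  choose s hs using fun j => limit_W (fun i => b.repr (x i) j)
  choose z hz using hs
  refine ⟨b.equivFun.symm s, fun n => ⟨b.equivFun.symm fun j => z j n, ?_⟩⟩
  apply b.equivFun.injective
  ext1 j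
  simp only [LinearEquiv.apply_symm_apply, map_add, map_sum, map_smul, Pi.add_apply,
    Finset.sum_apply, Pi.smul_apply, smul_eq_mul, Module.Basis.equivFun_apply]
  exact hz j n

theorem haus_M (x : M) (h : ∀ n, ∃ z : M, x = (p : WittVector p k) ^ n • z) : x = 0 := by
  let b := Module.finBasis (WittVector p k) M
  apply b.equivFun.injective
  ext1 j
  rw [map_zero]
  refine haus_W _ fun n => ?_
  obtain ⟨z, hz⟩ := h n
  exact ⟨b.equivFun z j, by rw [hz, map_smul]; rfl⟩

theorem surj (F : M →+ M)
    (hF : ∀ (a : WittVector p k) (x : M), F (a • x) = WittVector.frobenius a • F x) (y : M) :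
    ∃ s : M, s - F s = y := by
  choose X Z hXZ using surj_mod_p F hF
  have hFp : ∀ n (x : M), F ((p : WittVector p k) ^ n • x) = (p : WittVector p k) ^ n • F x := by
    intro n x; rw [hF]; simp
  obtain ⟨s, hs⟩ := limit_M (p := p) (k := k) fun i => X (Z^[i] y)
  have hy : ∀ n, y = ∑ i ∈ Finset.range n, (p : WittVector p k) ^ i •
      (X (Z^[i] y) - F (X (Z^[i] y))) + (p : WittVector p k) ^ n • Z^[n] y := by
    intro n
    induction n with
    | zero => simp
    | succ n ih =>
      conv_lhs => rw [ih, hXZ (Z^[n] y)]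
      rw [Finset.sum_range_succ, Function.iterate_succ_apply', pow_succ]
      module
  refine ⟨s, sub_eq_zero.1 (haus_M (p := p) (k := k) _ fun n => ?_)⟩
  obtain ⟨z, hz⟩ := hs n
  refine ⟨z - F z - Z^[n] y, ?_⟩
  conv_lhs => rw [hy n, hz]
  simp only [map_add, map_sum, hFp, smul_sub, Finset.sum_sub_distrib]
  abel

end

theorem fixed (a : WittVector p k) (h : WittVector.frobenius a = a) :
    ∃ c : WittVector p (ZMod p), WittVector.map (ZMod.castHom (dvd_refl p) k) c = a := by
  have : ∀ n, ∃ d : ZMod p, ZMod.castHom (dvd_refl p) k d = a.coeff n := by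
    intro n
    have h1 : a.coeff n ^ p = a.coeff n := by
      rw [← WittVector.coeff_frobenius_charP, h]
    rw [← Subfield.mem_bot_iff_pow_eq_self, ← ZMod.fieldRange_castHom_eq_bot p] at h1
    exact h1
  choose d hd using this
  exact ⟨.mk p d, by ext n; rw [WittVector.map_coeff]; exact hd n⟩

theorem map_fixed (c : WittVector p (ZMod p)) :
    WittVector.frobenius (WittVector.map (ZMod.castHom (dvd_refl p) k) c) =
      WittVector.map (ZMod.castHom (dvd_refl p) k) c := by
  ext n
  rw [WittVector.coeff_frobenius_charP, WittVector.map_coeff, ← map_pow, ZMod.pow_card]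

theorem ker_free {M : Type*} [AddCommGroup M] [Module (WittVector p k) M]
    [Module.Free (WittVector p k) M] [Module.Finite (WittVector p k) M] (F : M →+ M)
    (hF : ∀ (a : WittVector p k) (x : M), F (a • x) = WittVector.frobenius a • F x)
    (K : AddSubgroup M) (hK : ∀ x, x ∈ K ↔ F x = x) :
    ∃ r : ℕ, r ≤ Module.finrank (WittVector p k) M ∧
      ∃ e : Fin r → M, (∀ i, e i ∈ K) ∧ LinearIndependent (WittVector p k) e ∧
        ∀ x ∈ K, x ∈ Submodule.span (WittVector p k) (Set.range e) := by
  let N := Submodule.span (WittVector p k) (K : Set M)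
  let v : K → N := fun x => ⟨x, Submodule.subset_span x.2⟩
  have hv : Submodule.span (WittVector p k) (Set.range v) = ⊤ := by
    have : Set.range v = ((↑) : N → M) ⁻¹' (K : Set M) := by
      ext x; constructor
      · rintro ⟨y, rfl⟩; exact y.2
      · intro h; exact ⟨⟨x, h⟩, rfl⟩
    rw [this]
    exact Submodule.span_span_coe_preimage
  have : Module.FinitePresentation (WittVector p k) N :=
    Module.finitePresentation_of_finite _ _
  obtain ⟨κ, a, b, hb⟩ := Module.exists_basis_of_span_of_flat v hv
  have := Module.Finite.finite_basis b
  let := Fintype.ofFinite κ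
  let g := Fintype.equivFin κ
  let b' := b.reindex g
  have hb' : ∀ i, b' i = v (a (g.symm i)) := fun i => by simp [b', hb]
  refine ⟨Fintype.card κ, ?_, fun i => (b' i : M), ?_, ?_, ?_⟩
  · rw [← Module.finrank_eq_card_basis b]; exact Submodule.finrank_le _
  · intro i; beta_reduce; rw [hb']; exact (a (g.symm i)).2
  · exact b'.linearIndependent.map' N.subtype (Submodule.ker_subtype _)
  · intro x hx
    have : (N.subtype (v ⟨x, hx⟩)) ∈ (Submodule.span (WittVector p k) (Set.range b')).map N.subtype :=
      Submodule.mem_map_of_mem (by rw [b'.span_eq]; trivial)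
    rw [Submodule.map_span, ← Set.range_comp] at this
    exact this

end Stmt4Aux


/-- Let `k` be an algebraically closed field of characteristic `p > 0`,
`W = W(k)` its Witt ring with Frobenius `σ`, and `M` a finite free `W`-module with an
additive `σ`-semilinear map `F : M → M`.  Then `1 − F : M → M` is surjective, and its
kernel `M^{F=1}` is a free `ℤ_p`-module of finite rank at most the `W`-rank of `M`
(where `ℤ_p = W(𝔽_p)` acts on `M^{F=1}` through the natural inclusion
`W(𝔽_p) → W(k)`). -/
theorem stmt4 (p : ℕ) [Fact p.Prime] (k : Type*) [Field k] [IsAlgClosed k] [CharP k p]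
    (M : Type*) [AddCommGroup M] [Module (WittVector p k) M]
    [Module.Free (WittVector p k) M] [Module.Finite (WittVector p k) M]
    (F : M → M)
    (hFadd : ∀ x y : M, F (x + y) = F x + F y)
    (hFsl : ∀ (a : WittVector p k) (x : M), F (a • x) = WittVector.frobenius a • F x) :
    Function.Surjective (fun x : M => x - F x) ∧
    ∃ K : AddSubgroup M, (∀ x : M, x ∈ K ↔ F x = x) ∧
      ∃ r : ℕ, r ≤ Module.finrank (WittVector p k) M ∧
        ∃ φ : K ≃+ (Fin r → WittVector p (ZMod p)),
          ∀ (c : WittVector p (ZMod p)) (x : K),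
            ((φ.symm (c • φ x) : K) : M) =
              (WittVector.map (ZMod.castHom (dvd_refl p) k)) c • (x : M) := by
  let G : M →+ M := AddMonoidHom.mk' F hFadd
  have hG : ∀ (a : WittVector p k) (x : M), G (a • x) = WittVector.frobenius a • G x := hFsl
  refine ⟨fun y => Stmt4Aux.surj G hG y, ?_⟩
  let K : AddSubgroup M := (AddMonoidHom.id M - G).ker
  have hK : ∀ x : M, x ∈ K ↔ F x = x := fun x => by
    change x - F x = 0 ↔ _
    rw [sub_eq_zero, eq_comm]
  refine ⟨K, hK, ?_⟩
  obtain ⟨r, hr, e, he, hli, hsp⟩ := Stmt4Aux.ker_free G hG K hK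
  refine ⟨r, hr, ?_⟩
  let ι := WittVector.map (p := p) (ZMod.castHom (dvd_refl p) k)
  have hι : Function.Injective ι := WittVector.map_injective _ (RingHom.injective _)
  have hmem : ∀ c : Fin r → WittVector p (ZMod p), ∑ i, ι (c i) • e i ∈ K := fun c =>
    sum_mem fun i _ => (hK _).2 (by
      rw [hFsl, Stmt4Aux.map_fixed, (hK _).1 (he i)])
  let ψ : (Fin r → WittVector p (ZMod p)) →+ K := AddMonoidHom.mk'
    (fun c => ⟨∑ i, ι (c i) • e i, hmem c⟩) (fun c d => by
      ext; simp [add_smul, Finset.sum_add_distrib])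
  have hψ : ∀ c, (ψ c : M) = ∑ i, ι (c i) • e i := fun _ => rfl
  have hbij : Function.Bijective ψ := by
    constructor
    · intro c d h
      have h' := congrArg (Subtype.val) h
      rw [hψ, hψ, ← sub_eq_zero, ← Finset.sum_sub_distrib] at h'
      simp only [← sub_smul] at h'
      ext1 i
      exact hι (sub_eq_zero.1 (Fintype.linearIndependent_iff.1 hli _ h' i))
    · intro x
      obtain ⟨a, ha⟩ := (Submodule.mem_span_range_iff_exists_fun _).1 (hsp x x.2)
      have hx : G x = x := (hK _).1 x.2
      have h' : ∑ i, (WittVector.frobenius (a i) - a i) • e i = 0 := by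
        have h2 : G (∑ i, a i • e i) = ∑ i, WittVector.frobenius (a i) • e i := by
          rw [map_sum]
          exact Finset.sum_congr rfl fun i _ => by
            rw [hG]; congr 1; exact (hK _).1 (he i)
        simp only [sub_smul, Finset.sum_sub_distrib]
        rw [← h2, ha, hx, sub_self]
      have h3 := fun i => Stmt4Aux.fixed (a i)
        (sub_eq_zero.1 (Fintype.linearIndependent_iff.1 hli _ h' i))
      choose c hc using h3
      refine ⟨c, Subtype.ext ?_⟩
      rw [hψ, ← ha]
      exact Finset.sum_congr rfl fun i _ => by rw [← hc i]
  refine ⟨(AddEquiv.ofBijective ψ hbij).symm, fun c x => ?_⟩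
  obtain ⟨d, rfl⟩ := hbij.2 x
  have h1 : (AddEquiv.ofBijective ψ hbij).symm (ψ d) = d :=
    (AddEquiv.ofBijective ψ hbij).symm_apply_apply d
  rw [h1, AddEquiv.symm_symm]
  change (ψ (c • d) : M) = ι c • (ψ d : M)
  rw [hψ, hψ, Finset.smul_sum]
  exact Finset.sum_congr rfl fun i _ => by
    rw [Pi.smul_apply, smul_eq_mul, map_mul, mul_smul]
end

section
/- Let k be an algebraically closed field of characteristic p > 0, W = W(k) its ring of p-typical Witt vectors with Frobenius σ, and let M be a finite free W-module equipped with an additive σ-semilinear map F : M → M. If x₁, …, x_r ∈ M satisfy F(xᵢ) = xᵢ for all i and are linearly independent over ℤ_p, then x₁, …, x_r are linearly independent over W. In particular, the ℤ_p-rank of M^{F=1} is at most the W-rank of M. -/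
/-- A Witt vector fixed by Frobenius comes from `W(F_p)`. -/
theorem fixed_mem (p : ℕ) [Fact p.Prime] (k : Type*) [Field k] [CharP k p]
    (b : WittVector p k) (hb : WittVector.frobenius b = b) :
    ∃ c : WittVector p (ZMod p), WittVector.map (ZMod.castHom (dvd_refl p) k) c = b := by
  have h : ∀ n, ∃ z : ZMod p, ZMod.castHom (dvd_refl p) k z = b.coeff n := by
    intro n
    have hn : b.coeff n ^ p = b.coeff n := by
      rw [← WittVector.coeff_frobenius_charP, hb]
    have hm := (Subfield.mem_bot_iff_pow_eq_self k p).mpr hn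
    rw [← ZMod.fieldRange_castHom_eq_bot p] at hm
    exact hm
  choose z hz using h
  refine ⟨WittVector.mk p z, ?_⟩
  ext n
  rw [WittVector.map_coeff]
  exact hz n

/-- Let `k` be an algebraically closed field of characteristic `p > 0`,
`W = W(k)` its Witt ring with Frobenius `σ`, and `M` a finite free `W`-module with an
additive `σ`-semilinear map `F : M → M`.  If `x₁, …, x_r ∈ M` are fixed by `F` and
linearly independent over `ℤ_p = W(𝔽_p)` (acting through the natural inclusion
`W(𝔽_p) → W(k)`), then they are linearly independent over `W`. -/
theorem stmt5 (p : ℕ) [Fact p.Prime] (k : Type*) [Field k] [IsAlgClosed k] [CharP k p]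
    (M : Type*) [AddCommGroup M] [Module (WittVector p k) M]
    [Module.Free (WittVector p k) M] [Module.Finite (WittVector p k) M]
    (F : M → M)
    (hFadd : ∀ x y : M, F (x + y) = F x + F y)
    (hFsl : ∀ (a : WittVector p k) (x : M), F (a • x) = WittVector.frobenius a • F x)
    (r : ℕ) (x : Fin r → M)
    (hfix : ∀ i, F (x i) = x i)
    (hindep : ∀ c : Fin r → WittVector p (ZMod p),
      (∑ i, (WittVector.map (ZMod.castHom (dvd_refl p) k)) (c i) • x i) = 0 →
        ∀ i, c i = 0) :
    LinearIndependent (WittVector p k) x := by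
  classical
  have hF0 : F 0 = 0 := by
    have h := hFadd 0 0
    rw [add_zero] at h
    exact left_eq_add.mp h
  have hFsum : ∀ (s : Finset (Fin r)) (f : Fin r → M), F (∑ i ∈ s, f i) = ∑ i ∈ s, F (f i) := by
    intro s f
    exact map_sum (AddMonoidHom.mk (ZeroHom.mk F hF0) hFadd) f s
  have key : ∀ (n : ℕ) (a : Fin r → WittVector p k),
      (Finset.univ.filter (fun i => a i ≠ 0)).card = n → ∑ i, a i • x i = 0 → a = 0 := by
    intro n
    induction n using Nat.strong_induction_on with
    | _ n ih =>
    intro a hcard hrel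
    by_contra hne
    have hex : (Finset.univ.filter (fun i => a i ≠ 0)).Nonempty := by
      obtain ⟨i, hi⟩ := Function.ne_iff.mp hne
      exact ⟨i, by simpa using hi⟩
    obtain ⟨j, hj, hmin⟩ := Finset.exists_min_image _
      (fun i => IsDiscreteValuationRing.addVal (WittVector p k) (a i)) hex
    have hj0 : a j ≠ 0 := by simpa using hj
    have hdvd : ∀ i, a j ∣ a i := by
      intro i
      by_cases hi : a i = 0
      · rw [hi]; exact dvd_zero _
      · exact IsDiscreteValuationRing.addVal_le_iff_dvd.mp (hmin i (by simpa using hi))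
    choose b hb using hdvd
    have hbj : b j = 1 := by
      have h := hb j
      exact mul_left_cancel₀ hj0 (by rw [mul_one]; exact h.symm)
    have hbrel : ∑ i, b i • x i = 0 := by
      have h : a j • ∑ i, b i • x i = 0 := by
        rw [Finset.smul_sum, ← hrel]
        refine Finset.sum_congr rfl fun i _ => ?_
        rw [smul_smul, ← hb i]
      exact (smul_eq_zero.mp h).resolve_left hj0
    have hFrel : ∑ i, WittVector.frobenius (b i) • x i = 0 := by
      have h := congrArg F hbrel
      rw [hFsum, hF0] at h
      rw [← h]
      refine Finset.sum_congr rfl fun i _ => ?_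
      rw [hFsl, hfix]
    have hzero : (fun i => WittVector.frobenius (b i) - b i) = 0 := by
      refine ih _ ?_ _ rfl ?_
      · rw [← hcard]
        apply Finset.card_lt_card
        refine (Finset.ssubset_iff_of_subset ?_).mpr ⟨j, hj, by simp [hbj]⟩
        intro i hi
        simp only [Finset.mem_filter, Finset.mem_univ, true_and] at hi ⊢
        intro h0
        apply hi
        have : b i = 0 := by
          have h := hb i
          rw [h0] at h
          exact (mul_eq_zero.mp h.symm).resolve_left hj0
        rw [this, map_zero, sub_zero]
      · simp only [sub_smul, Finset.sum_sub_distrib, hFrel, hbrel, sub_zero]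
    have hfixb : ∀ i, ∃ c : WittVector p (ZMod p),
        WittVector.map (ZMod.castHom (dvd_refl p) k) c = b i := by
      intro i
      exact fixed_mem p k (b i) (sub_eq_zero.mp (congrFun hzero i))
    choose c hc using hfixb
    have hcj := hindep c (by simpa only [hc] using hbrel) j
    have h1 := hc j
    rw [hcj, map_zero, hbj] at h1
    exact zero_ne_one h1
  rw [Fintype.linearIndependent_iff]
  intro g hg i
  exact congrFun (key _ g rfl hg) i
end
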